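/- Suppose the regularity assumption, the detectability assumption, and the initial stabilizing bound V_r⁰ ≤ ᾱ_V∘σ (with ᾱ_V of class K∞) hold. Then for every i ≥ 0: (a) the infimum defining V_r^{i+1} is attained, i.e., there exists a selection h of H_r^{i+1} (h(z) ∈ H_r^{i+1}(z) for all z) such that V_r^{i+1}(x) = J(x,h) for every x ∈ ℝ^n; (b) this h satisfies V_r^{i+1}(x) = ℓ(x,h(x)) + V_r^{i+1}(f(x,h(x))) for every x; and (c) V_r^{i+1}(x) ≤ V_r^i(x) ≤ ᾱ_V(σ(x)) for every x. -/

import Mathlib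

/-!
The claim is a dynamic-programming argument for a control system whose input is constrained to a
set-valued map `K = H_r^{i+1}` with nonempty values, closed graph and locally bounded values.

For such a `K`, the finite-horizon value functions `v_0 = 0`,
`v_{N+1}(x) = inf_{u ∈ K x} ℓ(x,u) + v_N(f(x,u))` are lower semicontinuous and increase with `N`
(`finVal_lsc`, `finVal_mono`), and so is their supremum `v_∞`. The sets
`{u ∈ K x | ℓ(x,u) + v_N(f(x,u)) ≤ v_∞(x)}` are nonempty, compact and decreasing in `N`, so Cantor's
intersection theorem provides a selection `h` of `K` with
`ℓ(x,h x) + v_∞(f(x,h x)) ≤ v_∞(x)` (`exists_policy_supVal`). Such an inequality bounds the cost: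
`J(·,h) ≤ v_∞` (`Jcost_le_of_supersolution`). Every selection of `K` costs at least `v_∞`
(`finVal_le_Jcost`), so `h` attains the infimum and the optimal value is the lower semicontinuous
function `v_∞`.

By induction on `i`, `V_r^i` is lower semicontinuous, is bounded by `ᾱ_V ∘ σ`, and is the cost of an
admissible policy `g`. Optimality of the points of `H^{i+1}` against `g` gives
`ℓ(x,u) + V_r^i(f(x,u)) ≤ V_r^i(x)` for `u ∈ H^{i+1}(x)`. On the one hand this bounds `ℓ(x,u)` locally
in `x`, so that level-boundedness makes `H^{i+1}`, hence `H_r^{i+1}`, locally bounded; on the other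
hand it shows that any selection of `H^{i+1} ⊆ H_r^{i+1}` costs at most `V_r^i`, which is the
monotonicity `V_r^{i+1} ≤ V_r^i`. Points of `H_r^{i+1}` need not be minimizers, but they are
admissible because the graph of `U` is closed.
-/

open scoped NNReal ENNReal Topology

noncomputable section

/-- A class-K∞ function on `ℝ≥0 ≃ [0,∞)`. -/
def ClassKInf (α : ℝ≥0 → ℝ≥0) : Prop :=
  Continuous α ∧ StrictMono α ∧ α 0 = 0 ∧ ∀ M : ℝ≥0, ∃ s : ℝ≥0, M ≤ α s

/-- A class-KL function on `[0,∞) × [0,∞)`. -/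
def ClassKL (β : ℝ≥0 → ℝ≥0 → ℝ≥0) : Prop :=
  (∀ t, Continuous fun s => β s t) ∧ (∀ t, Monotone fun s => β s t) ∧
    (∀ t, β 0 t = 0) ∧ (∀ s, Antitone fun t => β s t) ∧
    (∀ s, Filter.Tendsto (fun t => β s t) Filter.atTop (nhds 0))

variable {n m : ℕ}

/-- Closed-loop solution of `x(k+1) = f(x(k), h(x(k)))` from `x`. -/
def phiCL (f : (Fin n → ℝ) → (Fin m → ℝ) → Fin n → ℝ)
    (h : (Fin n → ℝ) → Fin m → ℝ) (x : Fin n → ℝ) : ℕ → Fin n → ℝ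
  | 0 => x
  | k + 1 => f (phiCL f h x k) (h (phiCL f h x k))

/-- Infinite-horizon closed-loop cost `J(x,h)`, valued in `[0,∞]`. -/
def Jcost (f : (Fin n → ℝ) → (Fin m → ℝ) → Fin n → ℝ)
    (ℓ : (Fin n → ℝ) → (Fin m → ℝ) → ℝ≥0)
    (x : Fin n → ℝ) (h : (Fin n → ℝ) → Fin m → ℝ) : ℝ≥0∞ :=
  ∑' k : ℕ, (ℓ (phiCL f h x k) (h (phiCL f h x k)) : ℝ≥0∞)

/-- Improvement step: minimizers of `u ↦ ℓ(x,u) + V(f(x,u))` over `U(x)`. -/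
def Himp (f : (Fin n → ℝ) → (Fin m → ℝ) → Fin n → ℝ)
    (ℓ : (Fin n → ℝ) → (Fin m → ℝ) → ℝ≥0)
    (Uset : (Fin n → ℝ) → Set (Fin m → ℝ))
    (V : (Fin n → ℝ) → ℝ≥0∞) (x : Fin n → ℝ) : Set (Fin m → ℝ) :=
  {u ∈ Uset x | ∀ u' ∈ Uset x,
    (ℓ x u : ℝ≥0∞) + V (f x u) ≤ (ℓ x u' : ℝ≥0∞) + V (f x u')}

/-- Outer semicontinuous regularization of a set-valued map:
`H_r(x) = ⋂_{δ>0} closure(∪_{|y-x|≤δ} H(y))`. -/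
def Hreg (H : (Fin n → ℝ) → Set (Fin m → ℝ)) (x : Fin n → ℝ) : Set (Fin m → ℝ) :=
  ⋂ (δ : ℝ) (_ : 0 < δ), closure (⋃ y ∈ Metric.closedBall x δ, H y)

/-- The PI⁺ value functions: `V_r⁰ = J(·,h⁰)` and `V_r^{i+1}(x)` is the
infimum in `[0,∞]` of `J(x,h)` over all selections `h` of
`H_r^{i+1} = Hreg (Himp V_r^i)`. -/
def VR (f : (Fin n → ℝ) → (Fin m → ℝ) → Fin n → ℝ)
    (ℓ : (Fin n → ℝ) → (Fin m → ℝ) → ℝ≥0)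
    (Uset : (Fin n → ℝ) → Set (Fin m → ℝ))
    (h0 : (Fin n → ℝ) → Fin m → ℝ) : ℕ → (Fin n → ℝ) → ℝ≥0∞
  | 0 => fun x => Jcost f ℓ x h0
  | i + 1 => fun x =>
      ⨅ (h : (Fin n → ℝ) → Fin m → ℝ)
        (_ : ∀ z, h z ∈ Hreg (Himp f ℓ Uset (VR f ℓ Uset h0 i)) z),
        Jcost f ℓ x h

/-- The PI⁺ improvement maps `Hⁱ` (with `H⁰(x) = {h⁰(x)}`). -/
def HseqPI (f : (Fin n → ℝ) → (Fin m → ℝ) → Fin n → ℝ)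
    (ℓ : (Fin n → ℝ) → (Fin m → ℝ) → ℝ≥0)
    (Uset : (Fin n → ℝ) → Set (Fin m → ℝ))
    (h0 : (Fin n → ℝ) → Fin m → ℝ) : ℕ → (Fin n → ℝ) → Set (Fin m → ℝ)
  | 0 => fun x => {h0 x}
  | i + 1 => Himp f ℓ Uset (VR f ℓ Uset h0 i)

/-- The PI⁺ regularized maps `H_rⁱ` (with `H_r⁰(x) = {h⁰(x)}`). -/
def HrseqPI (f : (Fin n → ℝ) → (Fin m → ℝ) → Fin n → ℝ)
    (ℓ : (Fin n → ℝ) → (Fin m → ℝ) → ℝ≥0)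
    (Uset : (Fin n → ℝ) → Set (Fin m → ℝ))
    (h0 : (Fin n → ℝ) → Fin m → ℝ) : ℕ → (Fin n → ℝ) → Set (Fin m → ℝ)
  | 0 => fun x => {h0 x}
  | i + 1 => Hreg (Himp f ℓ Uset (VR f ℓ Uset h0 i))

/-- The PI⁺ selected maps `H_r^{*,i}`: minimizers of
`u ↦ ℓ(x,u) + V_r^i(f(x,u))` over `H_r^i(x)` (with `H_r^{*,0}(x) = {h⁰(x)}`). -/
def HstarPI (f : (Fin n → ℝ) → (Fin m → ℝ) → Fin n → ℝ)
    (ℓ : (Fin n → ℝ) → (Fin m → ℝ) → ℝ≥0)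
    (Uset : (Fin n → ℝ) → Set (Fin m → ℝ))
    (h0 : (Fin n → ℝ) → Fin m → ℝ) : ℕ → (Fin n → ℝ) → Set (Fin m → ℝ)
  | 0 => fun x => {h0 x}
  | i + 1 => fun x =>
      {u ∈ HrseqPI f ℓ Uset h0 (i + 1) x |
        ∀ u' ∈ HrseqPI f ℓ Uset h0 (i + 1) x,
          (ℓ x u : ℝ≥0∞) + VR f ℓ Uset h0 (i + 1) (f x u)
            ≤ (ℓ x u' : ℝ≥0∞) + VR f ℓ Uset h0 (i + 1) (f x u')}

/-! ### Cost of a policy -/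

theorem phiCL_succ' (f : (Fin n → ℝ) → (Fin m → ℝ) → Fin n → ℝ)
    (h : (Fin n → ℝ) → Fin m → ℝ) (x : Fin n → ℝ) (k : ℕ) :
    phiCL f h x (k + 1) = phiCL f h (f x (h x)) k := by
  induction k with
  | zero => rfl
  | succ k ih =>
    change f (phiCL f h x (k + 1)) (h (phiCL f h x (k + 1))) = _
    rw [ih]; rfl

theorem Jcost_eq (f : (Fin n → ℝ) → (Fin m → ℝ) → Fin n → ℝ)
    (ℓ : (Fin n → ℝ) → (Fin m → ℝ) → ℝ≥0)
    (h : (Fin n → ℝ) → Fin m → ℝ) (x : Fin n → ℝ) :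
    Jcost f ℓ x h = (ℓ x (h x) : ℝ≥0∞) + Jcost f ℓ (f x (h x)) h := by
  unfold Jcost
  rw [tsum_eq_zero_add' ENNReal.summable]
  simp only [phiCL_succ']
  rfl

/-- A function that decreases along the closed loop by at least the stage cost dominates the
infinite-horizon cost. -/
theorem Jcost_le_of_supersolution (f : (Fin n → ℝ) → (Fin m → ℝ) → Fin n → ℝ)
    (ℓ : (Fin n → ℝ) → (Fin m → ℝ) → ℝ≥0)
    (h : (Fin n → ℝ) → Fin m → ℝ) (V : (Fin n → ℝ) → ℝ≥0∞)
    (hV : ∀ x, (ℓ x (h x) : ℝ≥0∞) + V (f x (h x)) ≤ V x) (x : Fin n → ℝ) :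
    Jcost f ℓ x h ≤ V x := by
  unfold Jcost
  rw [ENNReal.tsum_eq_iSup_nat]
  refine iSup_le fun N => ?_
  suffices H : (∑ k ∈ Finset.range N, (ℓ (phiCL f h x k) (h (phiCL f h x k)) : ℝ≥0∞))
      + V (phiCL f h x N) ≤ V x from le_self_add.trans H
  induction N with
  | zero => simp [phiCL]
  | succ N ih =>
    rw [Finset.sum_range_succ, add_assoc]
    exact (add_le_add_right (hV _) _).trans ih

/-! ### Dynamic programming under a closed, locally bounded input constraint -/

/-- Finite-horizon value functions for inputs constrained to `K`, with zero terminal cost. -/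
def finVal (f : (Fin n → ℝ) → (Fin m → ℝ) → Fin n → ℝ)
    (ℓ : (Fin n → ℝ) → (Fin m → ℝ) → ℝ≥0)
    (K : (Fin n → ℝ) → Set (Fin m → ℝ)) : ℕ → (Fin n → ℝ) → ℝ≥0∞
  | 0 => fun _ => 0
  | N + 1 => fun x => ⨅ u ∈ K x, ((ℓ x u : ℝ≥0∞) + finVal f ℓ K N (f x u))

/-- A set-valued map is locally bounded if near each point its values lie in a common compact
set. -/
def LocBdd (K : (Fin n → ℝ) → Set (Fin m → ℝ)) : Prop :=
  ∀ x, ∃ B : Set (Fin m → ℝ), IsCompact B ∧ ∀ᶠ z in 𝓝 x, K z ⊆ B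

theorem isCompact_value {K : (Fin n → ℝ) → Set (Fin m → ℝ)}
    (hKc : IsClosed {p : (Fin n → ℝ) × (Fin m → ℝ) | p.2 ∈ K p.1}) (hKb : LocBdd K)
    (x : Fin n → ℝ) : IsCompact (K x) := by
  obtain ⟨B, hB, hz⟩ := hKb x
  exact hB.of_isClosed_subset
    (hKc.preimage (Continuous.prodMk_right x : Continuous fun u : Fin m → ℝ => (x, u)))
    hz.self_of_nhds

theorem lsc_stage {f : (Fin n → ℝ) → (Fin m → ℝ) → Fin n → ℝ}
    {ℓ : (Fin n → ℝ) → (Fin m → ℝ) → ℝ≥0}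
    (hf : Continuous fun p : (Fin n → ℝ) × (Fin m → ℝ) => f p.1 p.2)
    (hl : Continuous fun p : (Fin n → ℝ) × (Fin m → ℝ) => ℓ p.1 p.2)
    {V : (Fin n → ℝ) → ℝ≥0∞} (hV : LowerSemicontinuous V) :
    LowerSemicontinuous fun p : (Fin n → ℝ) × (Fin m → ℝ) =>
      (ℓ p.1 p.2 : ℝ≥0∞) + V (f p.1 p.2) :=
  (ENNReal.continuous_coe.comp hl).lowerSemicontinuous.add (hV.comp hf)

/-- Partial minimization over a closed, locally bounded constraint preserves lower
semicontinuity. -/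
theorem lsc_partial_min {K : (Fin n → ℝ) → Set (Fin m → ℝ)}
    (hKc : IsClosed {p : (Fin n → ℝ) × (Fin m → ℝ) | p.2 ∈ K p.1}) (hKb : LocBdd K)
    {c : (Fin n → ℝ) → (Fin m → ℝ) → ℝ≥0∞}
    (hc : LowerSemicontinuous fun p : (Fin n → ℝ) × (Fin m → ℝ) => c p.1 p.2) :
    LowerSemicontinuous fun x => ⨅ u ∈ K x, c x u := by
  intro x y hy
  obtain ⟨y', hyy', hy'⟩ := exists_between hy
  obtain ⟨B, hB, hz⟩ := hKb x
  have hcl : ∀ u ∈ B, ∀ᶠ p : (Fin n → ℝ) × (Fin m → ℝ) in 𝓝 (x, u),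
      p.2 ∈ K p.1 → y' < c p.1 p.2 := by
    intro u _
    by_cases hu : u ∈ K x
    · have h1 : y' < c x u := hy'.trans_le (iInf₂_le u hu)
      filter_upwards [hc (x, u) y' h1] with p hp _ using hp
    · have h2 : {p : (Fin n → ℝ) × (Fin m → ℝ) | p.2 ∈ K p.1}ᶜ ∈ 𝓝 (x, u) :=
        hKc.isOpen_compl.mem_nhds hu
      filter_upwards [h2] with p hp hp' using absurd hp' hp
  filter_upwards [hz, hB.eventually_forall_of_forall_eventually
    (P := fun z u => u ∈ K z → y' < c z u) hcl] with z hz1 hz2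
  exact hyy'.trans_le (le_iInf₂ fun u hu => (hz2 u (hz1 hu) hu).le)

section DP

variable {f : (Fin n → ℝ) → (Fin m → ℝ) → Fin n → ℝ}
  {ℓ : (Fin n → ℝ) → (Fin m → ℝ) → ℝ≥0} {K : (Fin n → ℝ) → Set (Fin m → ℝ)}

theorem finVal_lsc
    (hf : Continuous fun p : (Fin n → ℝ) × (Fin m → ℝ) => f p.1 p.2)
    (hl : Continuous fun p : (Fin n → ℝ) × (Fin m → ℝ) => ℓ p.1 p.2)
    (hKc : IsClosed {p : (Fin n → ℝ) × (Fin m → ℝ) | p.2 ∈ K p.1}) (hKb : LocBdd K) (N : ℕ) :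
    LowerSemicontinuous (finVal f ℓ K N) := by
  induction N with
  | zero => exact lowerSemicontinuous_const
  | succ N ih => exact lsc_partial_min hKc hKb (lsc_stage hf hl ih)

theorem finVal_mono : Monotone (finVal f ℓ K) := by
  refine monotone_nat_of_le_succ fun N => ?_
  induction N with
  | zero => intro x; exact zero_le
  | succ N ih =>
    intro x
    exact iInf₂_mono fun u _ => add_le_add_right (ih (f x u)) _

theorem finVal_le_Jcost {h : (Fin n → ℝ) → Fin m → ℝ} (hh : ∀ z, h z ∈ K z) (N : ℕ)
    (x : Fin n → ℝ) : finVal f ℓ K N x ≤ Jcost f ℓ x h := by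
  induction N generalizing x with
  | zero => exact zero_le
  | succ N ih =>
    rw [Jcost_eq]
    exact (iInf₂_le (h x) (hh x)).trans (add_le_add_right (ih _) _)

/-- Some selection of `K` satisfies the Bellman inequality for the limit of the finite-horizon
values. -/
theorem exists_policy_supVal
    (hf : Continuous fun p : (Fin n → ℝ) × (Fin m → ℝ) => f p.1 p.2)
    (hl : Continuous fun p : (Fin n → ℝ) × (Fin m → ℝ) => ℓ p.1 p.2)
    (hKc : IsClosed {p : (Fin n → ℝ) × (Fin m → ℝ) | p.2 ∈ K p.1}) (hKb : LocBdd K)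
    (hKne : ∀ x, (K x).Nonempty) :
    ∃ h : (Fin n → ℝ) → Fin m → ℝ, (∀ z, h z ∈ K z) ∧
      ∀ x, (ℓ x (h x) : ℝ≥0∞) + (⨆ N, finVal f ℓ K N (f x (h x))) ≤ ⨆ N, finVal f ℓ K N x := by
  suffices H : ∀ x, ∃ u, u ∈ K x ∧
      (ℓ x u : ℝ≥0∞) + (⨆ N, finVal f ℓ K N (f x u)) ≤ ⨆ N, finVal f ℓ K N x by
    choose h h1 h2 using H
    exact ⟨h, h1, h2⟩
  intro x
  have hlsc : ∀ N, LowerSemicontinuous fun u => (ℓ x u : ℝ≥0∞) + finVal f ℓ K N (f x u) :=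
    fun N => (lsc_stage hf hl (finVal_lsc hf hl hKc hKb N)).comp
      (Continuous.prodMk_right x : Continuous fun u : Fin m → ℝ => (x, u))
  set s := ⨆ N, finVal f ℓ K N x with hs
  have hcomp := isCompact_value hKc hKb x
  let A : ℕ → Set (Fin m → ℝ) := fun N =>
    K x ∩ {u | (ℓ x u : ℝ≥0∞) + finVal f ℓ K N (f x u) ≤ s}
  have hAcl : ∀ N, IsClosed (A N) := fun N =>
    hcomp.isClosed.inter ((hlsc N).isClosed_preimage s)
  have hne : (⋂ N, A N).Nonempty := by
    refine IsCompact.nonempty_iInter_of_sequence_nonempty_isCompact_isClosed A ?_ ?_ ?_ hAcl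
    · rintro N u ⟨hu, hu'⟩
      exact ⟨hu, (add_le_add_right (finVal_mono (Nat.le_succ N) (f x u)) _).trans hu'⟩
    · intro N
      obtain ⟨u, hu, hmin⟩ :=
        ((hlsc N).lowerSemicontinuousOn (K x)).exists_isMinOn (hKne x) hcomp
      have h1 : (ℓ x u : ℝ≥0∞) + finVal f ℓ K N (f x u) ≤ finVal f ℓ K (N + 1) x :=
        le_iInf₂ fun v hv => hmin hv
      refine ⟨u, hu, h1.trans ?_⟩
      exact le_iSup (fun N => finVal f ℓ K N x) (N + 1)
    · exact hcomp.of_isClosed_subset (hAcl 0) Set.inter_subset_left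
  obtain ⟨u, hu⟩ := hne
  rw [Set.mem_iInter] at hu
  refine ⟨u, (hu 0).1, ?_⟩
  rw [ENNReal.add_iSup]
  exact iSup_le fun N => (hu N).2

/-- The optimal cost over selections of `K` is attained simultaneously at all initial states, and is
lower semicontinuous. -/
theorem exists_optimal_policy
    (hf : Continuous fun p : (Fin n → ℝ) × (Fin m → ℝ) => f p.1 p.2)
    (hl : Continuous fun p : (Fin n → ℝ) × (Fin m → ℝ) => ℓ p.1 p.2)
    (hKc : IsClosed {p : (Fin n → ℝ) × (Fin m → ℝ) | p.2 ∈ K p.1}) (hKb : LocBdd K)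
    (hKne : ∀ x, (K x).Nonempty) :
    ∃ h : (Fin n → ℝ) → Fin m → ℝ, (∀ z, h z ∈ K z) ∧
      (∀ x, (⨅ (g : (Fin n → ℝ) → Fin m → ℝ) (_ : ∀ z, g z ∈ K z), Jcost f ℓ x g)
        = Jcost f ℓ x h) ∧
      LowerSemicontinuous fun x => Jcost f ℓ x h := by
  obtain ⟨h, hK, hB⟩ := exists_policy_supVal hf hl hKc hKb hKne
  have hle := Jcost_le_of_supersolution f ℓ h (fun x => ⨆ N, finVal f ℓ K N x) hB
  have hge : ∀ g : (Fin n → ℝ) → Fin m → ℝ, (∀ z, g z ∈ K z) → ∀ x,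
      (⨆ N, finVal f ℓ K N x) ≤ Jcost f ℓ x g :=
    fun g hg x => iSup_le fun N => finVal_le_Jcost hg N x
  refine ⟨h, hK, fun x => le_antisymm (iInf₂_le h hK) ?_, ?_⟩
  · exact le_iInf₂ fun g hg => (hle x).trans (hge g hg x)
  · have : (fun x => Jcost f ℓ x h) = fun x => ⨆ N, finVal f ℓ K N x :=
      funext fun x => le_antisymm (hle x) (hge h hK x)
    rw [this]
    exact lowerSemicontinuous_iSup fun N => finVal_lsc hf hl hKc hKb N

end DP

/-! ### The regularized map -/

theorem subset_Hreg (H : (Fin n → ℝ) → Set (Fin m → ℝ)) (x : Fin n → ℝ) : H x ⊆ Hreg H x := by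
  intro u hu
  simp only [Hreg, Set.mem_iInter]
  exact fun δ hδ => subset_closure
    (Set.mem_biUnion (Metric.mem_closedBall_self hδ.le) hu)

/-- The values of `Hreg H` near `x` are controlled by the values of `H` on a ball around `x`. -/
theorem Hreg_subset_of_dist (H : (Fin n → ℝ) → Set (Fin m → ℝ)) {x z : Fin n → ℝ} {δ : ℝ}
    (hδ : 0 < δ) (hz : dist z x ≤ δ / 2) :
    Hreg H z ⊆ closure (⋃ y ∈ Metric.closedBall x δ, H y) := by
  intro u hu
  simp only [Hreg, Set.mem_iInter] at hu
  refine closure_mono (Set.biUnion_subset_biUnion_left ?_) (hu (δ / 2) (by positivity))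
  exact Metric.closedBall_subset_closedBall' (by linarith)

theorem isClosed_graph_Hreg (H : (Fin n → ℝ) → Set (Fin m → ℝ)) :
    IsClosed {p : (Fin n → ℝ) × (Fin m → ℝ) | p.2 ∈ Hreg H p.1} := by
  rw [← isOpen_compl_iff, isOpen_iff_mem_nhds]
  rintro ⟨x, u⟩ hu
  simp only [Set.mem_compl_iff, Set.mem_ofPred_eq] at hu
  have hu' : ∃ δ : ℝ, 0 < δ ∧ u ∉ closure (⋃ y ∈ Metric.closedBall x δ, H y) := by
    by_contra hcon
    push Not at hcon
    exact hu (Set.mem_iInter₂.2 hcon)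
  obtain ⟨δ, hδ, hn⟩ := hu'
  filter_upwards [prod_mem_nhds (Metric.closedBall_mem_nhds x (half_pos hδ))
    (isClosed_closure.isOpen_compl.mem_nhds hn)] with p hp hp'
  exact hp.2 (Hreg_subset_of_dist H hδ hp.1 hp')

theorem locBdd_Hreg {H : (Fin n → ℝ) → Set (Fin m → ℝ)} (hH : LocBdd H) : LocBdd (Hreg H) := by
  intro x
  obtain ⟨B, hB, hz⟩ := hH x
  obtain ⟨δ, hδ, hsub⟩ := Metric.nhds_basis_closedBall.mem_iff.1 hz
  refine ⟨B, hB, ?_⟩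
  filter_upwards [Metric.closedBall_mem_nhds x (half_pos hδ)] with z hz'
  exact (Hreg_subset_of_dist H hδ hz').trans
    (closure_minimal (Set.iUnion₂_subset fun y hy => hsub hy) hB.isClosed)

theorem Hreg_subset_of_closed {H U : (Fin n → ℝ) → Set (Fin m → ℝ)} (hHU : ∀ x, H x ⊆ U x)
    (hU : IsClosed {p : (Fin n → ℝ) × (Fin m → ℝ) | p.2 ∈ U p.1}) (x : Fin n → ℝ) :
    Hreg H x ⊆ U x := by
  intro u hu
  change (x, u) ∈ {p : (Fin n → ℝ) × (Fin m → ℝ) | p.2 ∈ U p.1}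
  rw [← hU.closure_eq, Metric.mem_closure_iff]
  intro ε hε
  simp only [Hreg, Set.mem_iInter] at hu
  obtain ⟨v, hv, hd⟩ := Metric.mem_closure_iff.1 (hu (ε / 2) (half_pos hε)) ε hε
  simp only [Set.mem_iUnion] at hv
  obtain ⟨y, hy, hv⟩ := hv
  refine ⟨(y, v), hHU y hv, ?_⟩
  rw [Metric.mem_closedBall, dist_comm] at hy
  rw [Prod.dist_eq]
  exact max_lt (by dsimp only; linarith) hd

/-! ### The improvement map -/

theorem Himp_nonempty {f : (Fin n → ℝ) → (Fin m → ℝ) → Fin n → ℝ}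
    {ℓ : (Fin n → ℝ) → (Fin m → ℝ) → ℝ≥0} {Uset : (Fin n → ℝ) → Set (Fin m → ℝ)}
    (hUne : ∀ x, (Uset x).Nonempty)
    (hf : Continuous fun p : (Fin n → ℝ) × (Fin m → ℝ) => f p.1 p.2)
    (hl : Continuous fun p : (Fin n → ℝ) × (Fin m → ℝ) => ℓ p.1 p.2)
    (hlb : ∀ (x : Fin n → ℝ) (a : ℝ), ∃ S ∈ 𝓝 x, ∃ B : Set (Fin m → ℝ),
      Bornology.IsBounded B ∧ ∀ z ∈ S, {u : Fin m → ℝ | (ℓ z u : ℝ) ≤ a} ⊆ B)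
    (hUgraph : IsClosed {p : (Fin n → ℝ) × (Fin m → ℝ) | p.2 ∈ Uset p.1})
    {V : (Fin n → ℝ) → ℝ≥0∞} (hV : LowerSemicontinuous V) (hVfin : ∀ x, V x ≠ ⊤)
    (x : Fin n → ℝ) : (Himp f ℓ Uset V x).Nonempty := by
  have hcont : Continuous fun u : Fin m → ℝ => (x, u) := Continuous.prodMk_right x
  obtain ⟨u0, hu0⟩ := hUne x
  have hlsc : LowerSemicontinuous fun u => (ℓ x u : ℝ≥0∞) + V (f x u) :=
    (lsc_stage hf hl hV).comp hcont
  have hcl : IsClosed (Uset x) := hUgraph.preimage hcont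
  -- Minimizing over `Uset x` amounts to minimizing over the compact sublevel set at level `s`.
  set s := (ℓ x u0 : ℝ≥0∞) + V (f x u0) with hs
  have hsfin : s ≠ ⊤ := ENNReal.add_ne_top.2 ⟨ENNReal.coe_ne_top, hVfin _⟩
  obtain ⟨S, hS, B, hB, hSB⟩ := hlb x s.toReal
  have hcomp : IsCompact (Uset x ∩ {u | (ℓ x u : ℝ≥0∞) + V (f x u) ≤ s}) := by
    refine Metric.isCompact_of_isClosed_isBounded
      (hcl.inter (hlsc.isClosed_preimage s)) (hB.subset ?_)
    rintro u ⟨_, hu⟩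
    refine hSB x (mem_of_mem_nhds hS) ?_
    have h1 : (ℓ x u : ℝ≥0∞) ≤ s := le_self_add.trans hu
    exact ENNReal.toReal_mono hsfin h1
  have hne : (Uset x ∩ {u | (ℓ x u : ℝ≥0∞) + V (f x u) ≤ s}).Nonempty := ⟨u0, hu0, le_refl s⟩
  obtain ⟨u, hu, hmin⟩ := (hlsc.lowerSemicontinuousOn _).exists_isMinOn hne hcomp
  refine ⟨u, hu.1, fun v hv => ?_⟩
  rcases le_total ((ℓ x v : ℝ≥0∞) + V (f x v)) s with h | h
  · exact hmin ⟨hv, h⟩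
  · exact le_trans hu.2 h

/-- If the stage cost over `H x` is bounded by a continuous function of `x`, then
level-boundedness of `ℓ` makes `H` locally bounded. -/
theorem locBdd_of_stage_le {ℓ : (Fin n → ℝ) → (Fin m → ℝ) → ℝ≥0}
    (hlb : ∀ (x : Fin n → ℝ) (a : ℝ), ∃ S ∈ 𝓝 x, ∃ B : Set (Fin m → ℝ),
      Bornology.IsBounded B ∧ ∀ z ∈ S, {u : Fin m → ℝ | (ℓ z u : ℝ) ≤ a} ⊆ B)
    {H : (Fin n → ℝ) → Set (Fin m → ℝ)} {b : (Fin n → ℝ) → ℝ≥0} (hb : Continuous b)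
    (hH : ∀ x, ∀ u ∈ H x, ℓ x u ≤ b x) : LocBdd H := by
  intro x
  obtain ⟨S, hS, B, hB, hSB⟩ := hlb x ((b x + 1 : ℝ≥0) : ℝ)
  refine ⟨closure B, hB.isCompact_closure, ?_⟩
  have hlt : ∀ᶠ z in 𝓝 x, b z < b x + 1 :=
    hb.continuousAt.eventually_lt continuousAt_const (lt_add_of_pos_right _ one_pos)
  filter_upwards [hS, hlt] with z hz hz' u hu
  exact subset_closure (hSB z hz (NNReal.coe_le_coe.2 ((hH z u hu).trans hz'.le)))

/-- One step of the recursion: a lower semicontinuous value function `V` that is the cost of an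
admissible policy `g` and is bounded by a finite continuous function yields an optimal selection of
the regularized improvement map, whose cost inherits lower semicontinuity and does not exceed
`V`. -/
theorem evaluation_step {f : (Fin n → ℝ) → (Fin m → ℝ) → Fin n → ℝ}
    {ℓ : (Fin n → ℝ) → (Fin m → ℝ) → ℝ≥0} {Uset : (Fin n → ℝ) → Set (Fin m → ℝ)}
    (hUne : ∀ x, (Uset x).Nonempty)
    (hf : Continuous fun p : (Fin n → ℝ) × (Fin m → ℝ) => f p.1 p.2)
    (hl : Continuous fun p : (Fin n → ℝ) × (Fin m → ℝ) => ℓ p.1 p.2)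
    (hlb : ∀ (x : Fin n → ℝ) (a : ℝ), ∃ S ∈ 𝓝 x, ∃ B : Set (Fin m → ℝ),
      Bornology.IsBounded B ∧ ∀ z ∈ S, {u : Fin m → ℝ | (ℓ z u : ℝ) ≤ a} ⊆ B)
    (hUgraph : IsClosed {p : (Fin n → ℝ) × (Fin m → ℝ) | p.2 ∈ Uset p.1})
    {V : (Fin n → ℝ) → ℝ≥0∞} (hV : LowerSemicontinuous V)
    {b : (Fin n → ℝ) → ℝ≥0} (hb : Continuous b) (hVb : ∀ x, V x ≤ b x)
    {g : (Fin n → ℝ) → Fin m → ℝ} (hg : ∀ x, g x ∈ Uset x) (hVg : ∀ x, V x = Jcost f ℓ x g) :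
    ∃ h : (Fin n → ℝ) → Fin m → ℝ, (∀ z, h z ∈ Hreg (Himp f ℓ Uset V) z) ∧
      (∀ z, h z ∈ Uset z) ∧
      (∀ x, (⨅ (g : (Fin n → ℝ) → Fin m → ℝ) (_ : ∀ z, g z ∈ Hreg (Himp f ℓ Uset V) z),
        Jcost f ℓ x g) = Jcost f ℓ x h) ∧
      LowerSemicontinuous (fun x => Jcost f ℓ x h) ∧
      ∀ x, Jcost f ℓ x h ≤ V x := by
  -- Minimizers do at least as well as the policy `g`, whose one-step cost equals `V`.
  have hdec : ∀ x, ∀ u ∈ Himp f ℓ Uset V x, (ℓ x u : ℝ≥0∞) + V (f x u) ≤ V x := by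
    intro x u hu
    refine (hu.2 (g x) (hg x)).trans (le_of_eq ?_)
    rw [hVg x, hVg, ← Jcost_eq]
  have hne := Himp_nonempty hUne hf hl hlb hUgraph hV
    (fun x => ne_top_of_le_ne_top ENNReal.coe_ne_top (hVb x))
  have hbdd : LocBdd (Himp f ℓ Uset V) := locBdd_of_stage_le hlb hb fun x u hu =>
    ENNReal.coe_le_coe.1 (le_self_add.trans ((hdec x u hu).trans (hVb x)))
  obtain ⟨h, hK, hopt, hlsc⟩ := exists_optimal_policy hf hl
    (isClosed_graph_Hreg (Himp f ℓ Uset V)) (locBdd_Hreg hbdd)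
    (fun x => (hne x).mono (subset_Hreg _ x))
  refine ⟨h, hK, fun z => Hreg_subset_of_closed (fun _ _ hu => hu.1) hUgraph z (hK z), hopt, hlsc,
    fun x => ?_⟩
  choose k hk using hne
  rw [← hopt x]
  exact (iInf₂_le k fun z => subset_Hreg _ z (hk z)).trans
    (Jcost_le_of_supersolution f ℓ k V (fun x => hdec x _ (hk x)) x)

/-- the infimum defining `V_r^{i+1}` is attained by some
selection `h` of `H_r^{i+1}`, this `h` satisfies the Bellman-type identity,
and `V_r^{i+1} ≤ V_rⁱ ≤ ᾱ_V ∘ σ`. -/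
theorem piplus_evaluation_step
    (f : (Fin n → ℝ) → (Fin m → ℝ) → Fin n → ℝ)
    (ℓ : (Fin n → ℝ) → (Fin m → ℝ) → ℝ≥0)
    (Uset : (Fin n → ℝ) → Set (Fin m → ℝ))
    (hUne : ∀ x, (Uset x).Nonempty)
    (σ : (Fin n → ℝ) → ℝ≥0) (hσ : Continuous σ)
    -- initial admissible policy
    (h0 : (Fin n → ℝ) → Fin m → ℝ) (h0adm : ∀ x, h0 x ∈ Uset x)
    -- regularity assumption
    (hf : Continuous fun p : (Fin n → ℝ) × (Fin m → ℝ) => f p.1 p.2)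
    (hl : Continuous fun p : (Fin n → ℝ) × (Fin m → ℝ) => ℓ p.1 p.2)
    (hlb : ∀ (x : Fin n → ℝ) (a : ℝ), ∃ S ∈ 𝓝 x, ∃ B : Set (Fin m → ℝ),
      Bornology.IsBounded B ∧ ∀ z ∈ S, {u : Fin m → ℝ | (ℓ z u : ℝ) ≤ a} ⊆ B)
    (hUgraph : IsClosed {p : (Fin n → ℝ) × (Fin m → ℝ) | p.2 ∈ Uset p.1})
    (hV0lsc : LowerSemicontinuous fun x => Jcost f ℓ x h0)
    (hsublevel : ∀ Δ : ℝ≥0, 0 < Δ → IsCompact {x : Fin n → ℝ | σ x ≤ Δ})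
    -- detectability assumption
    (W : (Fin n → ℝ) → ℝ≥0) (hWcont : Continuous W)
    (alphaW chiW : ℝ≥0 → ℝ≥0) (halphaW : ClassKInf alphaW) (hchiW : ClassKInf chiW)
    (alphaWbar : ℝ≥0 → ℝ≥0) (halphaWbar_cont : Continuous alphaWbar)
    (halphaWbar_mono : Monotone alphaWbar) (halphaWbar_zero : alphaWbar 0 = 0)
    (hdet1 : ∀ x, W x ≤ alphaWbar (σ x))
    (hdet2 : ∀ x, ∀ u ∈ Uset x, W (f x u) + alphaW (σ x) ≤ W x + chiW (ℓ x u))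
    -- initial stabilizing bound `V_r⁰ ≤ ᾱ_V ∘ σ`
    (alphaV : ℝ≥0 → ℝ≥0) (halphaV : ClassKInf alphaV)
    (hV0 : ∀ x, Jcost f ℓ x h0 ≤ (alphaV (σ x) : ℝ≥0∞))
    :
    ∀ i : ℕ, ∃ h : (Fin n → ℝ) → Fin m → ℝ,
      (∀ z, h z ∈ HrseqPI f ℓ Uset h0 (i + 1) z) ∧
      (∀ x, VR f ℓ Uset h0 (i + 1) x = Jcost f ℓ x h) ∧
      (∀ x, VR f ℓ Uset h0 (i + 1) x
        = (ℓ x (h x) : ℝ≥0∞) + VR f ℓ Uset h0 (i + 1) (f x (h x))) ∧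
      (∀ x, VR f ℓ Uset h0 (i + 1) x ≤ VR f ℓ Uset h0 i x) ∧
      (∀ x, VR f ℓ Uset h0 i x ≤ (alphaV (σ x) : ℝ≥0∞)) := by
  have key : ∀ i : ℕ, LowerSemicontinuous (VR f ℓ Uset h0 i) ∧
      (∀ x, VR f ℓ Uset h0 i x ≤ (alphaV (σ x) : ℝ≥0∞)) ∧
      ∃ g : (Fin n → ℝ) → Fin m → ℝ, (∀ x, g x ∈ Uset x) ∧
        ∀ x, VR f ℓ Uset h0 i x = Jcost f ℓ x g := by
    intro i
    induction i with
    | zero => exact ⟨hV0lsc, hV0, h0, h0adm, fun _ => rfl⟩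
    | succ i ih =>
      obtain ⟨hlsc, hbd, g, hg, hVg⟩ := ih
      obtain ⟨h, -, hU, hopt, hlsc', hle⟩ := evaluation_step hUne hf hl hlb hUgraph hlsc
        (b := fun x => alphaV (σ x)) (halphaV.1.comp hσ) hbd hg hVg
      have hVR : VR f ℓ Uset h0 (i + 1) = fun x => Jcost f ℓ x h := funext hopt
      rw [hVR]
      exact ⟨hlsc', fun x => (hle x).trans (hbd x), h, hU, fun _ => rfl⟩
  intro i
  obtain ⟨hlsc, hbd, g, hg, hVg⟩ := key i
  obtain ⟨h, hK, -, hopt, -, hle⟩ := evaluation_step hUne hf hl hlb hUgraph hlsc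
    (b := fun x => alphaV (σ x)) (halphaV.1.comp hσ) hbd hg hVg
  have hVR : ∀ x, VR f ℓ Uset h0 (i + 1) x = Jcost f ℓ x h := hopt
  refine ⟨h, hK, hVR, fun x => ?_, fun x => (hVR x).trans_le (hle x), hbd⟩
  rw [hVR, hVR]
  exact Jcost_eq f ℓ h x

end
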